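/- arXiv:1211.0333 — 2 statements merged into one kernel-verified Lean document; each statement's English description precedes it below -/
import Mathlib

section
/- Let S be a finite group acting on Λ by algebra automorphisms and E = {e_1,...,e_n} a complete set of primitive orthogonal idempotents of Λ closed under the action of S. Let {e_1,...,e_s} be a set of representatives of the S-orbits on E and set ε = e_1 + ... + e_s. Then the skew group algebra ΛS is Morita equivalent to the algebra ε(ΛS)ε. -/
set_option maxHeartbeats 1000000

noncomputable section
open Finset
open scoped Classical


section CoreSGA

variable {k : Type} [CommRing k] {Λ : Type} [Ring Λ] [Algebra k Λ]
variable {G : Type} [Group G] [Fintype G]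

/-- The skew group algebra `Λ ⊗_k kG` (as functions `G → Λ`), with multiplication
`(λ ⊗ g) ⬝ (μ ⊗ h) = λ · g(μ) ⊗ gh`. -/
structure SGA (σ : G →* (Λ ≃ₐ[k] Λ)) : Type where
  toFun : G → Λ

namespace SGA

variable {σ : G →* (Λ ≃ₐ[k] Λ)}

@[simp] lemma mk_toFun (f : G → Λ) : (SGA.mk f : SGA σ).toFun = f := rfl

@[ext] lemma ext {f h : SGA σ} (w : ∀ g, f.toFun g = h.toFun g) : f = h := by
  cases f; cases h; simp only [mk.injEq]; funext g; exact w g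

/-- The underlying-function equivalence. -/
def equivFun : SGA σ ≃ (G → Λ) := ⟨toFun, mk, fun _ => rfl, fun _ => rfl⟩

instance : AddCommGroup (SGA σ) := (equivFun (σ := σ)).addCommGroup

@[simp] lemma toFun_add (f h : SGA σ) (g : G) : (f + h).toFun g = f.toFun g + h.toFun g := rfl
@[simp] lemma toFun_zero (g : G) : (0 : SGA σ).toFun g = 0 := rfl
@[simp] lemma toFun_neg (f : SGA σ) (g : G) : (-f).toFun g = -(f.toFun g) := rfl

instance : Mul (SGA σ) :=
  ⟨fun f h => ⟨fun x => ∑ g : G, f.toFun g * σ g (h.toFun (g⁻¹ * x))⟩⟩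

instance : One (SGA σ) := ⟨⟨fun x => if x = 1 then 1 else 0⟩⟩

@[simp] lemma toFun_mul (f h : SGA σ) (x : G) :
    (f * h).toFun x = ∑ g : G, f.toFun g * σ g (h.toFun (g⁻¹ * x)) := rfl

lemma toFun_one (x : G) : (1 : SGA σ).toFun x = if x = 1 then 1 else 0 := rfl

protected lemma one_mul (f : SGA σ) : 1 * f = f := by
  ext x
  rw [toFun_mul]
  rw [Finset.sum_eq_single (1 : G)]
  · simp [toFun_one]
  · intro b _ hb
    simp [toFun_one, hb]
  · simp

protected lemma mul_one (f : SGA σ) : f * 1 = f := by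
  ext x
  rw [toFun_mul]
  rw [Finset.sum_eq_single (x : G)]
  · simp [toFun_one]
  · intro b _ hb
    have : b⁻¹ * x ≠ 1 := by
      intro hc
      rw [inv_mul_eq_one] at hc
      exact hb hc
    simp [toFun_one, this]
  · simp

protected lemma mul_assoc (f h e : SGA σ) : f * h * e = f * (h * e) := by
  ext x
  rw [toFun_mul, toFun_mul]
  simp only [toFun_mul, Finset.sum_mul, map_sum, Finset.mul_sum, map_mul]
  rw [Finset.sum_comm]
  refine Finset.sum_congr rfl fun u _ => ?_
  rw [← Fintype.sum_equiv (Equiv.mulLeft u)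
    (fun v => f.toFun u * σ u (h.toFun v) * σ (u * v) (e.toFun ((u * v)⁻¹ * x)))
    (fun g => f.toFun u * σ u (h.toFun (u⁻¹ * g)) * σ g (e.toFun (g⁻¹ * x)))
    (fun v => by simp [Equiv.mulLeft])]
  refine Finset.sum_congr rfl fun v _ => ?_
  have h3 : (u * v)⁻¹ * x = v⁻¹ * (u⁻¹ * x) := by group
  have h4 : σ u (σ v (e.toFun (v⁻¹ * (u⁻¹ * x)))) = σ (u * v) (e.toFun (v⁻¹ * (u⁻¹ * x))) := by
    rw [map_mul σ]; rfl
  rw [h3, ← h4, mul_assoc]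

protected lemma left_distrib (f h e : SGA σ) : f * (h + e) = f * h + f * e := by
  ext x
  simp [mul_add, Finset.sum_add_distrib]

protected lemma right_distrib (f h e : SGA σ) : (f + h) * e = f * e + h * e := by
  ext x
  simp [add_mul, Finset.sum_add_distrib]

protected lemma zero_mul (f : SGA σ) : 0 * f = 0 := by
  ext x; simp

protected lemma mul_zero (f : SGA σ) : f * 0 = 0 := by
  ext x; simp

instance instRing : Ring (SGA σ) :=
  { (inferInstance : AddCommGroup (SGA σ)),
    (inferInstance : Mul (SGA σ)), (inferInstance : One (SGA σ)) with
    mul_assoc := SGA.mul_assoc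
    one_mul := SGA.one_mul
    mul_one := SGA.mul_one
    left_distrib := SGA.left_distrib
    right_distrib := SGA.right_distrib
    zero_mul := SGA.zero_mul
    mul_zero := SGA.mul_zero }

/-- The canonical inclusion `Λ → ΛG`, `λ ↦ λ ⊗ 1`. -/
def emb (σ : G →* (Λ ≃ₐ[k] Λ)) : Λ →+* SGA σ where
  toFun a := ⟨fun x => if x = 1 then a else 0⟩
  map_one' := rfl
  map_zero' := by ext x; simp
  map_add' a b := by ext x; by_cases hx : x = 1 <;> simp [hx]
  map_mul' a b := by
    ext x
    rw [toFun_mul]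
    rw [Finset.sum_eq_single (1 : G)]
    · by_cases hx : x = 1 <;> simp [hx]
    · intro b' _ hb'; simp [hb']
    · simp

end SGA

end CoreSGA

section GeneralDefs

/-- An idempotent `e` is primitive if it is nonzero and cannot be written as a sum of two
nonzero orthogonal idempotents. -/
def IsPrimitiveIdempotent (A : Type) [Ring A] (e : A) : Prop :=
  IsIdempotentElem e ∧ e ≠ 0 ∧
    ∀ f g : A, IsIdempotentElem f → IsIdempotentElem g → f * g = 0 → g * f = 0 →
      e = f + g → f = 0 ∨ g = 0

/-- A finite family `e : Fin n → A` is a complete set of primitive orthogonal idempotents. -/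
def IsCompletePrimitiveOrthogonalSystem (A : Type) [Ring A] {n : ℕ} (e : Fin n → A) : Prop :=
  (∀ i, IsPrimitiveIdempotent A (e i)) ∧
    (∀ i j, i ≠ j → e i * e j = 0) ∧ (∑ i, e i = 1)

/-- A ring is connected (indecomposable as an algebra) if its only central idempotents
are `0` and `1`. -/
def IsConnectedRing (A : Type) [Ring A] : Prop :=
  Nontrivial A ∧ ∀ e : A, IsIdempotentElem e → (∀ x : A, e * x = x * e) → e = 0 ∨ e = 1

/-- A ring is basic if it admits a complete set of primitive orthogonal idempotents `e i`
such that the indecomposable projective left modules `A e i` are pairwise nonisomorphic. -/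
def IsBasicRing (A : Type) [Ring A] : Prop :=
  ∃ (n : ℕ) (e : Fin n → A), IsCompletePrimitiveOrthogonalSystem A e ∧
    ∀ i j, i ≠ j →
      IsEmpty ((Submodule.span A {e i} : Submodule A A) ≃ₗ[A] (Submodule.span A {e j} : Submodule A A))

/-- `projDimLE A n M` : the `A`-module `M` admits a projective resolution of length at
most `n`, i.e. has projective dimension `≤ n`. -/
def projDimLE (A : Type) [Ring A] (n : ℕ) (M : Type) [AddCommGroup M] [Module A M] : Prop :=
  ∃ (P : ℕ → ModuleCat.{0} A) (d : (i : ℕ) → (P (i + 1) →ₗ[A] P i)) (ε : P 0 →ₗ[A] M),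
    (∀ i, Module.Projective A (P i)) ∧
    Function.Surjective ε ∧
    LinearMap.range (d 0) = LinearMap.ker ε ∧
    (∀ i, LinearMap.range (d (i + 1)) = LinearMap.ker (d i)) ∧
    (∀ i, n < i → ∀ x : P i, x = 0)

/-- The (little) global dimension of a ring, as an element of `ℕ∞`: the least `n` such that
every finitely generated `A`-module has projective dimension at most `n` (and `⊤` if there
is no such `n`). -/
noncomputable def globalDim (A : Type) [Ring A] : ℕ∞ :=
  sInf {c : ℕ∞ | ∃ n : ℕ, c = (n : ℕ∞) ∧
    ∀ (M : Type) [AddCommGroup M] [Module A M], Module.Finite A M → projDimLE A n M}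

/-- A module is indecomposable if it is nonzero and is not the internal direct sum of two
nonzero submodules. -/
def IsIndecomposableModule (A : Type) [Ring A] (M : Type) [AddCommGroup M] [Module A M] : Prop :=
  Nontrivial M ∧ ∀ N₁ N₂ : Submodule A M, IsCompl N₁ N₂ → N₁ = ⊥ ∨ N₂ = ⊥

/-- A ring has finite representation type if there are only finitely many isomorphism classes
of finitely generated indecomposable left modules. -/
def FiniteRepType (A : Type) [Ring A] : Prop :=
  ∃ S : Set (Σ m : ℕ, Submodule A (Fin m → A)), S.Finite ∧
    ∀ (M : Type) [AddCommGroup M] [Module A M], Module.Finite A M →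
      IsIndecomposableModule A M →
        ∃ p ∈ S, Nonempty (M ≃ₗ[A] ((Fin p.1 → A) ⧸ p.2))

/-- Two rings are Morita equivalent if their categories of modules are equivalent. -/
def MoritaEquivalent (A B : Type) [Ring A] [Ring B] : Prop :=
  Nonempty (ModuleCat.{0} A ≌ ModuleCat.{0} B)

/-- An Auslander algebra: global dimension at most `2`, and there is an exact sequence
`0 → A → I₀ → I₁` with `I₀`, `I₁` both projective and injective (equivalently, in a minimal
injective resolution `0 → A → I₀ → I₁ → I₂ → 0` the terms `I₀` and `I₁` are projective). -/
def IsAuslanderAlgebra (A : Type) [Ring A] : Prop :=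
  globalDim A ≤ 2 ∧
    ∃ (I₀ I₁ : ModuleCat.{0} A) (f : A →ₗ[A] I₀) (g : I₀ →ₗ[A] I₁),
      Module.Injective A I₀ ∧ Module.Projective A I₀ ∧
      Module.Injective A I₁ ∧ Module.Projective A I₁ ∧
      Function.Injective f ∧ LinearMap.ker g = LinearMap.range f

/-- The `i`-th power of a left ideal (with `I ^ 0 = ⊤`). -/
def leftIdealPow (A : Type) [Ring A] (I : Submodule A A) : ℕ → Submodule A A
  | 0 => ⊤
  | n + 1 => Submodule.span A {x : A | ∃ a ∈ I, ∃ b ∈ leftIdealPow A I n, x = a * b}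

end GeneralDefs
section CornerRing

/-- The corner ring `εAε` associated to an idempotent `ε` of a ring `A`. -/
def Corner {A : Type} [Ring A] {ε : A} (hε : IsIdempotentElem ε) : Type :=
  {x : A // ε * x = x ∧ x * ε = x}

namespace Corner

variable {A : Type} [Ring A] {ε : A} (hε : IsIdempotentElem ε)

instance : Ring (Corner hε) where
  add x y := ⟨x.1 + y.1, by rw [mul_add, x.2.1, y.2.1], by rw [add_mul, x.2.2, y.2.2]⟩
  add_assoc a b c := Subtype.ext (add_assoc _ _ _)
  zero := ⟨0, by simp, by simp⟩
  zero_add a := Subtype.ext (zero_add _)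
  add_zero a := Subtype.ext (add_zero _)
  add_comm a b := Subtype.ext (add_comm _ _)
  mul x y := ⟨x.1 * y.1, by rw [← mul_assoc, x.2.1], by rw [mul_assoc, y.2.2]⟩
  left_distrib a b c := Subtype.ext (mul_add _ _ _)
  right_distrib a b c := Subtype.ext (add_mul _ _ _)
  zero_mul a := Subtype.ext (zero_mul _)
  mul_zero a := Subtype.ext (mul_zero _)
  mul_assoc a b c := Subtype.ext (mul_assoc _ _ _)
  one := ⟨ε, hε, hε⟩
  one_mul a := Subtype.ext a.2.1
  mul_one a := Subtype.ext a.2.2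
  neg x := ⟨-x.1, by rw [mul_neg, x.2.1], by rw [neg_mul, x.2.2]⟩
  neg_add_cancel a := Subtype.ext (neg_add_cancel _)
  nsmul n x := ⟨n • x.1, by rw [mul_smul_comm, x.2.1], by rw [smul_mul_assoc, x.2.2]⟩
  nsmul_zero x := Subtype.ext (zero_nsmul _)
  nsmul_succ n x := Subtype.ext (succ_nsmul _ _)
  zsmul n x := ⟨n • x.1, by rw [mul_smul_comm, x.2.1], by rw [smul_mul_assoc, x.2.2]⟩
  zsmul_zero' x := Subtype.ext (zero_zsmul _)
  zsmul_succ' n x := Subtype.ext (by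
    show ((Int.ofNat n.succ) • x.1 : A) = (Int.ofNat n) • x.1 + x.1
    have : (Int.ofNat n.succ) = Int.ofNat n + 1 := rfl
    rw [this, add_zsmul, one_zsmul])
  zsmul_neg' n x := Subtype.ext (by
    show ((Int.negSucc n) • x.1 : A) = -(((n.succ : ℤ)) • x.1)
    rw [negSucc_zsmul]
    simp)

end Corner

end CornerRing

/-!
The projection `A → εA` makes `εA` an `(εAε, A)`-bimodule, so `M ↦ εM` has the candidate inverse
`N ↦ Hom_{εAε}(εA, N)`. Evaluation at `ε` identifies `ε Hom_{εAε}(εA, N)` with `N` for every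
idempotent `ε`. The map `M → Hom_{εAε}(εA, εM)`, `m ↦ (y ↦ y m)`, has kernel and cokernel killed
by `ε`, so it is bijective as soon as `AεA = A`.

For `A = ΛS`, conjugation by `1 ⊗ g` carries `e ⊗ 1` to `g(e) ⊗ 1`. Hence the two-sided ideal
generated by `ε` contains every `e_i ⊗ 1`, and therefore their sum `1`.
-/

section FullIdempotent

variable {A : Type*} [Ring A]

lemma mem_span_sum_of_orthogonalIdempotents {ι : Type*} [Fintype ι] {e : ι → A}
    (he : OrthogonalIdempotents e) (i : ι) : e i ∈ TwoSidedIdeal.span {∑ j, e j} := by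
  rw [← he.mul_sum_of_mem (Finset.mem_univ i)]
  exact TwoSidedIdeal.mul_mem_left _ _ _ (TwoSidedIdeal.subset_span rfl)

lemma le_of_smul_mem_of_span_eq_top {X : Type*} [AddCommGroup X] [Module A X] {a : A}
    (ha : TwoSidedIdeal.span {a} = ⊤) {P Q : Submodule A X}
    (h : ∀ x ∈ Q, a • x ∈ P) : Q ≤ P := by
  have hle : TwoSidedIdeal.span {a} ≤ (P.colon (Q : Set X)).toTwoSided :=
    TwoSidedIdeal.span_le.2 <| Set.singleton_subset_iff.2 <|
      Ideal.mem_toTwoSided.2 <| Submodule.mem_colon.2 h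
  have hone : (1 : A) ∈ P.colon (Q : Set X) :=
    Ideal.mem_toTwoSided.1 <| hle <| ha ▸ TwoSidedIdeal.mem_top _
  exact (Submodule.colon_eq_top_iff_subset _).1 <| (Ideal.eq_top_iff_one _).2 hone

end FullIdempotent

section PeirceComponent

variable {A : Type} [Ring A]

/-- The Peirce component `εM` of a left `A`-module `M`, on which the corner ring `εAε` acts. It is
encoded as the elements fixed by `ε`, which form the image of `ε` when `ε` is idempotent. -/
def peirceComponent (ε : A) (M : Type*) [AddCommGroup M] [Module A M] : AddSubgroup M :=
  (DistribSMul.toAddMonoidHom M ε).eqLocus (AddMonoidHom.id M)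

namespace Corner

open CategoryTheory

universe v

variable {ε : A} {hε : IsIdempotentElem ε}
variable {M : Type*} [AddCommGroup M] [Module A M]
variable {M' : Type*} [AddCommGroup M'] [Module A M']
variable {N : Type*} [AddCommGroup N] [Module (Corner hε) N]

instance : Module (Corner hε) (peirceComponent ε M) where
  smul c m := ⟨c.1 • m.1, (smul_smul ε c.1 m.1).trans (congrArg (· • m.1) c.2.1)⟩
  one_smul m := Subtype.ext m.2
  mul_smul c d m := Subtype.ext (mul_smul c.1 d.1 m.1)
  smul_zero c := Subtype.ext (smul_zero c.1)
  smul_add c m m' := Subtype.ext (smul_add c.1 m.1 m'.1)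
  add_smul c d m := Subtype.ext (add_smul c.1 d.1 m.1)
  zero_smul m := Subtype.ext (zero_smul A m.1)

variable (hε) in
/-- The map `εM → εM'` induced by a linear map `M → M'`. -/
def peirceMap (f : M →ₗ[A] M') : peirceComponent ε M →ₗ[Corner hε] peirceComponent ε M' where
  toFun m := ⟨f m.1, (map_smul f ε m.1).symm.trans (congrArg f m.2)⟩
  map_add' m m' := Subtype.ext (map_add f m.1 m'.1)
  map_smul' c m := Subtype.ext (map_smul f c.1 m.1)

variable (hε) in
/-- The functor `M ↦ εM` from `A`-modules to `εAε`-modules. -/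
def peirceFunctor : ModuleCat.{v} A ⥤ ModuleCat.{v} (Corner hε) where
  obj M := ModuleCat.of (Corner hε) (peirceComponent ε M)
  map f := ModuleCat.ofHom (peirceMap hε f.hom)

variable (hε) in
/-- The action map `y ↦ y • m` from `εA` to `εM`. For `M = A` it is right multiplication by an
element of `A`, the right `A`-action on the bimodule `εA`. -/
def actOn (m : M) : peirceComponent ε A →ₗ[Corner hε] peirceComponent ε M where
  toFun y := ⟨y.1 • m, (smul_smul ε y.1 m).trans (congrArg (· • m) y.2)⟩
  map_add' y z := Subtype.ext (add_smul y.1 z.1 m)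
  map_smul' c y := Subtype.ext (mul_smul c.1 y.1 m)

/-- The left `A`-module structure on `Hom_{εAε}(εA, N)` coming from the right action of `A` on
`εA`. -/
local instance coinducedModule : Module A (peirceComponent ε A →ₗ[Corner hε] N) where
  smul a φ := φ ∘ₗ actOn hε a
  one_smul φ := LinearMap.ext fun y => congrArg φ (Subtype.ext (mul_one y.1))
  mul_smul a b φ := LinearMap.ext fun y => congrArg φ (Subtype.ext (mul_assoc y.1 a b).symm)
  smul_zero _ := rfl
  smul_add _ _ _ := rfl
  add_smul a b φ := LinearMap.ext fun y =>
    (congrArg φ (Subtype.ext (mul_add y.1 a b))).trans (map_add φ _ _)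
  zero_smul φ := LinearMap.ext fun y =>
    (congrArg φ (Subtype.ext (mul_zero y.1))).trans (map_zero φ)

lemma coinduced_smul_apply (a : A) (φ : peirceComponent ε A →ₗ[Corner hε] N)
    (y : peirceComponent ε A) : (a • φ) y = φ (actOn hε a y) := rfl

variable (hε) in
/-- The functor `N ↦ Hom_{εAε}(εA, N)` from `εAε`-modules to `A`-modules. -/
def coinducedFunctor : ModuleCat.{v} (Corner hε) ⥤ ModuleCat.{v} A where
  obj N := ModuleCat.of A (peirceComponent ε A →ₗ[Corner hε] N)
  map f := ModuleCat.ofHom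
    { toFun := fun φ => f.hom ∘ₗ φ
      map_add' := fun _ _ => LinearMap.comp_add _ _ _
      map_smul' := fun _ _ => rfl }

variable (hε) in
/-- The generator `ε` of `εA`. -/
def gen : peirceComponent ε A := ⟨ε, hε⟩

variable (hε) in
/-- Right multiplication by `ε`, as a map `εA → εAε`. -/
def toCorner : peirceComponent ε A →ₗ[Corner hε] Corner hε where
  toFun y := ⟨y.1 * ε, by rw [← mul_assoc]; exact congrArg (· * ε) y.2,
    by rw [mul_assoc, hε.eq]⟩
  map_add' y z := Subtype.ext (add_mul y.1 z.1 ε)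
  map_smul' c y := Subtype.ext (mul_assoc c.1 y.1 ε)

lemma toCorner_gen : toCorner hε (gen hε) = 1 := Subtype.ext hε

lemma toCorner_smul_gen (y : peirceComponent ε A) : toCorner hε y • gen hε = actOn hε ε y :=
  Subtype.ext (by change y.1 * ε * ε = y.1 * ε; rw [mul_assoc, hε.eq])

lemma idempotent_smul_apply (φ : peirceComponent ε A →ₗ[Corner hε] N)
    (y : peirceComponent ε A) : (ε • φ) y = toCorner hε y • φ (gen hε) := by
  rw [coinduced_smul_apply, ← toCorner_smul_gen, map_smul]

variable (hε M) in
/-- The unit `m ↦ (y ↦ y • m)` from `M` to `Hom_{εAε}(εA, εM)`, for any idempotent `ε`. -/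
def toCoinduced : M →ₗ[A] (peirceComponent ε A →ₗ[Corner hε] peirceComponent ε M) where
  toFun m := actOn hε m
  map_add' m m' := LinearMap.ext fun y => Subtype.ext (smul_add y.1 m m')
  map_smul' a m := LinearMap.ext fun y => Subtype.ext (smul_smul y.1 a m)

lemma idempotent_smul_eq_zero_of_mem_ker {m : M} (hm : m ∈ LinearMap.ker (toCoinduced hε M)) :
    ε • m = 0 :=
  congrArg Subtype.val (LinearMap.congr_fun (LinearMap.mem_ker.1 hm) (gen hε))

lemma idempotent_smul_mem_range (φ : peirceComponent ε A →ₗ[Corner hε] peirceComponent ε M) :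
    ε • φ ∈ LinearMap.range (toCoinduced hε M) := by
  refine ⟨(φ (gen hε)).1, LinearMap.ext fun y => ?_⟩
  rw [idempotent_smul_apply]
  refine Subtype.ext ?_
  change y.1 • (φ (gen hε)).1 = (y.1 * ε) • (φ (gen hε)).1
  rw [mul_smul]
  exact congrArg (y.1 • ·) (φ (gen hε)).2.symm

lemma toCoinduced_bijective (hfull : TwoSidedIdeal.span {ε} = ⊤) :
    Function.Bijective (toCoinduced hε M) := by
  constructor
  · refine LinearMap.ker_eq_bot.1 <| le_bot_iff.1 <| le_of_smul_mem_of_span_eq_top hfull ?_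
    exact fun _ hm => (Submodule.mem_bot A).2 (idempotent_smul_eq_zero_of_mem_ker hm)
  · refine LinearMap.range_eq_top.1 <| top_le_iff.1 <| le_of_smul_mem_of_span_eq_top hfull ?_
    exact fun φ _ => idempotent_smul_mem_range φ

lemma smulRight_gen (n : N) : (toCorner hε).smulRight n (gen hε) = n := by
  rw [LinearMap.smulRight_apply, toCorner_gen, one_smul]

lemma idempotent_smul_smulRight (n : N) :
    ε • (toCorner hε).smulRight n = (toCorner hε).smulRight n :=
  LinearMap.ext fun y => by
    rw [idempotent_smul_apply, smulRight_gen, LinearMap.smulRight_apply]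

variable (hε N) in
/-- The counit `φ ↦ φ ε`, identifying `ε Hom_{εAε}(εA, N)` with `N`. -/
def evalEquiv :
    peirceComponent ε (peirceComponent ε A →ₗ[Corner hε] N) ≃ₗ[Corner hε] N where
  toFun φ := φ.1 (gen hε)
  map_add' _ _ := rfl
  map_smul' c φ := by
    have hgen : actOn hε c.1 (gen hε) = c • gen hε := Subtype.ext (c.2.1.trans c.2.2.symm)
    exact (congrArg φ.1 hgen).trans (map_smul φ.1 c _)
  invFun n := ⟨(toCorner hε).smulRight n, idempotent_smul_smulRight n⟩
  left_inv φ := Subtype.ext <| LinearMap.ext fun y =>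
    (idempotent_smul_apply φ.1 y).symm.trans (LinearMap.congr_fun φ.2 y)
  right_inv := smulRight_gen

variable (hε) in
/-- The equivalence `M ↦ εM` of module categories given by a full idempotent, that is, an
idempotent `ε` with `AεA = A`. -/
def moduleCatEquivalence (hfull : TwoSidedIdeal.span {ε} = ⊤) :
    ModuleCat.{v} A ≌ ModuleCat.{v} (Corner hε) :=
  .mk (peirceFunctor hε) (coinducedFunctor hε)
    (NatIso.ofComponents
      (fun M => (LinearEquiv.ofBijective (toCoinduced hε M)
        (toCoinduced_bijective hfull)).toModuleIso)
      fun f => by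
        ext m
        exact LinearMap.ext fun y => Subtype.ext (map_smul f.hom y.1 m).symm)
    (NatIso.ofComponents (fun N => (evalEquiv hε N).toModuleIso) fun _ => rfl)

end Corner

end PeirceComponent

section SkewGroupAlgebra

variable {k : Type} [CommRing k] {Λ : Type} [Ring Λ] [Algebra k Λ]
variable {G : Type} [Group G] [Fintype G] {σ : G →* (Λ ≃ₐ[k] Λ)}

namespace SGA

variable (σ) in
/-- The pure tensor `x ⊗ g`. -/
def single (x : Λ) (g : G) : SGA σ := ⟨Pi.single g x⟩

lemma emb_eq_single (x : Λ) : emb σ x = single σ x 1 := by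
  ext h
  simp [emb, single, Pi.single_apply]

lemma single_mul_single (x y : Λ) (g h : G) :
    single σ x g * single σ y h = single σ (x * σ g y) (g * h) := by
  ext z
  rw [toFun_mul, Finset.sum_eq_single g]
  · by_cases hz : z = g * h <;> simp [single, inv_mul_eq_iff_eq_mul, hz]
  · intro c _ hc
    simp [single, hc]
  · simp

lemma single_inv_mul_emb_mul_single (g : G) (x : Λ) :
    single σ 1 g⁻¹ * emb σ (σ g x) * single σ 1 g = emb σ x := by
  have hx : σ g⁻¹ (σ g x) = x := by
    rw [← AlgEquiv.mul_apply, ← map_mul, inv_mul_cancel, map_one, AlgEquiv.one_apply]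
  simp only [emb_eq_single, single_mul_single, map_one, one_mul, mul_one, inv_mul_cancel, hx]

lemma emb_mem_of_emb_apply_mem {I : TwoSidedIdeal (SGA σ)} {g : G} {x : Λ}
    (h : emb σ (σ g x) ∈ I) : emb σ x ∈ I := by
  rw [← single_inv_mul_emb_mul_single g x]
  exact I.mul_mem_right _ _ (I.mul_mem_left _ _ h)

end SGA

variable {ι κ : Type*} [Fintype ι] [Fintype κ] {e : ι → Λ} {r : κ → ι}

lemma SGA.span_sum_emb_eq_top (he : CompleteOrthogonalIdempotents e) (hr : Function.Injective r)
    (hrep : ∀ i, ∃ g j, σ g (e i) = e (r j)) :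
    TwoSidedIdeal.span {∑ j, emb σ (e (r j))} = ⊤ := by
  set I := TwoSidedIdeal.span {∑ j, emb σ (e (r j))}
  have hmem_rep (j : κ) : emb σ (e (r j)) ∈ I :=
    mem_span_sum_of_orthogonalIdempotents ((he.map (emb σ)).embedding ⟨r, hr⟩) j
  have hmem (i : ι) : emb σ (e i) ∈ I := by
    obtain ⟨g, j, hgj⟩ := hrep i
    exact emb_mem_of_emb_apply_mem (hgj ▸ hmem_rep j)
  rw [← TwoSidedIdeal.one_mem_iff, ← map_one (emb σ), ← he.complete, map_sum]
  exact sum_mem fun i _ => hmem i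

theorem skew_group_algebra_morita_corner_general (he : CompleteOrthogonalIdempotents e)
    (hr : Function.Injective r) (hrep : ∀ i, ∃ g j, σ g (e i) = e (r j))
    (hε : IsIdempotentElem (∑ j, SGA.emb σ (e (r j)))) :
    MoritaEquivalent (SGA σ) (Corner hε) :=
  ⟨Corner.moduleCatEquivalence hε (SGA.span_sum_emb_eq_top he hr hrep)⟩

end SkewGroupAlgebra

/-- Let `S` be a finite group acting on `Λ`, `E = {e_1, ..., e_n}` a complete
set of primitive orthogonal idempotents of `Λ` closed under the action of `S`, and let
`ε = e_1 + ... + e_s` be the sum of a set of representatives of the `S`-orbits on `E`.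
Then `ΛS` is Morita equivalent to `ε(ΛS)ε`. -/
theorem skew_group_algebra_morita_corner
    (k : Type) [Field k] [IsAlgClosed k] (p : ℕ) [CharP k p]
    (Λ : Type) [Ring Λ] [Algebra k Λ] [FiniteDimensional k Λ]
    (hconn : IsConnectedRing Λ) (hbasic : IsBasicRing Λ)
    (S : Type) [Group S] [Fintype S]
    (σ : S →* (Λ ≃ₐ[k] Λ))
    (n : ℕ) (e : Fin n → Λ)
    (hE : IsCompletePrimitiveOrthogonalSystem Λ e)
    (hclosed : ∀ (g : S) (i : Fin n), ∃ j : Fin n, σ g (e i) = e j)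
    (s : ℕ) (r : Fin s → Fin n)
    (hrep : ∀ i : Fin n, ∃ (g : S) (j : Fin s), σ g (e i) = e (r j))
    (hdistinct : ∀ j j' : Fin s, j ≠ j' → ∀ g : S, σ g (e (r j)) ≠ e (r j'))
    (hε : IsIdempotentElem (∑ j, SGA.emb σ (e (r j)))) :
    MoritaEquivalent (SGA σ) (Corner hε) := by
  have he : CompleteOrthogonalIdempotents e := ⟨⟨fun i => (hE.1 i).1, hE.2.1⟩, hE.2.2⟩
  have hr : Function.Injective r := fun j j' hjj' => by
    by_contra hne
    exact hdistinct j j' hne 1 (by rw [map_one, AlgEquiv.one_apply, hjj'])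
  exact skew_group_algebra_morita_corner_general he hr hrep hε
end
end

section
/- Let S be a finite p-group acting on Λ by algebra automorphisms, where p = char k, and E = {e_1,...,e_n} a complete set of primitive orthogonal idempotents of Λ closed under the action of S, and suppose S acts freely on E. Then for every i ≥ 1, the i-th power of the Jacobson radical of the skew group algebra ΛS equals 𝔯^i ⊗_k kS, where 𝔯 is the Jacobson radical of Λ. -/
set_option maxHeartbeats 1000000

noncomputable section
open Finset
open scoped Classical


/-!
Write `𝔯` for the Jacobson radical of `Λ`. For primitive idempotents `e`, `f`, an element of `e Λ f`
outside `𝔯` has an inverse in `f Λ e` and so makes `Λ e` and `Λ f` isomorphic. As `Λ` is basic,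
`Λ/𝔯` is therefore reduced, and `b * a = 0` forces `a Λ b ⊆ 𝔯`.

Nakayama's lemma for the finite `Λ`-module `ΛS` gives `𝔯 ⊗ kS ⊆ rad ΛS`.
Conversely let `f ∈ rad ΛS` and `g ≠ 1`: as `g(e i)` and `e i` are orthogonal, the coefficient
`e i * f g * g(e i)` of `e i * f * e i` at `g` lies in `𝔯`. Hence `e i * f 1 * e i`, which differs
from `e i * f * e i` by an element of `𝔯 ⊗ kS`, lies in `rad ΛS ∩ Λ ⊆ 𝔯`; the corners
`e i * f 1 * e j` with `i ≠ j` lie in `𝔯` anyway. So `f 1 ∈ 𝔯`, and the other coefficients of `f`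
follow by translating `f` by group elements. Powers are computed coefficientwise because `𝔯` is
invariant under `S`.
-/

section Idempotents

variable {A : Type*} [Ring A]

lemma exists_unit_mul_eq_mul_of_isNilpotent_sub {g z : A} (hg : IsIdempotentElem g)
    (hgz : IsNilpotent (g - z)) : ∃ u : Aˣ, g * z = g * u := by
  obtain ⟨u, hu⟩ := hgz.isUnit_one_sub
  refine ⟨u, ?_⟩
  rw [hu, mul_sub, mul_sub, mul_one, hg.eq, sub_sub_cancel]

-- An idempotent `g` of `A` lifting a generator of the left ideal spanned by the image of `x` need
-- not lie in `A x`, but a conjugate of it does.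
lemma exists_isIdempotentElem_mul_ne_zero [IsSemiprimaryRing A] {x : A}
    (hx : x ∉ Ring.jacobson A) : ∃ y, IsIdempotentElem (y * x) ∧ y * x ≠ 0 := by
  let π := Ideal.Quotient.mk (Ring.jacobson A)
  have hker : ∀ z ∈ RingHom.ker π, IsNilpotent z := by
    intro z hz
    obtain ⟨N, hN⟩ := IsSemiprimaryRing.isNilpotent (R := A)
    rw [Ideal.mk_ker] at hz
    exact ⟨N, by simpa [hN] using Ideal.pow_mem_pow hz N⟩
  obtain ⟨c, hc, hspan⟩ := IsSemisimpleRing.ideal_eq_span_idempotent (Ideal.span {π x})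
  obtain ⟨y', hy'⟩ := Ideal.mem_span_singleton'.1 (hspan ▸ Ideal.mem_span_singleton_self c)
  obtain ⟨y, rfl⟩ := Ideal.Quotient.mk_surjective y'
  obtain ⟨g, hg, hgc⟩ :=
    exists_isIdempotentElem_eq_of_ker_isNilpotent π hker c (RingHom.mem_range.2 ⟨y * x, by
      rw [map_mul]; exact hy'⟩) hc
  have hg0 : g ≠ 0 := by
    rintro rfl
    rw [← hgc, map_zero, Ideal.span_singleton_zero, Ideal.span_singleton_eq_bot,
      Ideal.Quotient.eq_zero_iff_mem] at hspan
    exact hx hspan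
  have hnil : IsNilpotent (g - y * x) := hker _ <| by
    rw [RingHom.mem_ker, map_sub, map_mul, hgc, sub_eq_zero]; exact hy'.symm
  obtain ⟨u, hu⟩ := exists_unit_mul_eq_mul_of_isNilpotent_sub hg hnil
  have hconj : (↑u⁻¹ * g * y) * x = ↑u⁻¹ * g * u := by
    rw [mul_assoc (↑u⁻¹ : A) g u, ← hu]; noncomm_ring
  refine ⟨↑u⁻¹ * g * y, ?_, ?_⟩ <;> rw [hconj]
  · calc (↑u⁻¹ * g * u) * (↑u⁻¹ * g * u) = ↑u⁻¹ * (g * (u * ↑u⁻¹) * g) * u := by noncomm_ring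
      _ = ↑u⁻¹ * g * u := by rw [u.mul_inv, mul_one, hg.eq]
  · simpa using hg0

lemma mem_of_forall_mul_mul_mem {ι : Type*} [Fintype ι] {e : ι → A} (he : ∑ i, e i = 1)
    {I : Ideal A} {x : A} (h : ∀ i j, e i * x * e j ∈ I) : x ∈ I := by
  have hx : x = ∑ i, ∑ j, e i * x * e j := by
    simp only [← Finset.mul_sum, ← Finset.sum_mul, he, one_mul, mul_one]
  rw [hx]
  exact sum_mem fun i _ => sum_mem fun j _ => h i j

lemma corner_mul_self_mem {ι : Type*} [Fintype ι] {e : ι → A} {i : ι}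
    (hi : IsIdempotentElem (e i)) (he : ∑ j, e j = 1) {I : Ideal A} [I.IsTwoSided] {x : A}
    (hoff : ∀ j ≠ i, e i * x * e j ∈ I) (hx : x ^ 2 ∈ I) :
    e i * x * e i * (e i * x * e i) ∈ I := by
  have hsplit : e i * x ^ 2 * e i
      = e i * x * e i * (e i * x * e i) + ∑ j ∈ univ.erase i, e i * x * e j * (x * e i) := by
    calc e i * x ^ 2 * e i = ∑ j, e i * x * e j * (x * e i) := by
          rw [← Finset.sum_mul, ← Finset.mul_sum, he]; noncomm_ring
      _ = e i * x * (e i * e i) * (x * e i) + ∑ j ∈ univ.erase i, e i * x * e j * (x * e i) := by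
          rw [hi.eq]
          exact (Finset.add_sum_erase _ (fun j => e i * x * e j * (x * e i)) (mem_univ i)).symm
      _ = _ := by simp only [mul_assoc]
  have hrest : ∑ j ∈ univ.erase i, e i * x * e j * (x * e i) ∈ I :=
    sum_mem fun j hj => Ideal.mul_mem_right _ _ (hoff j (Finset.ne_of_mem_erase hj))
  rw [← Ideal.add_mem_iff_left _ hrest, ← hsplit]
  exact Ideal.mul_mem_right _ _ (Ideal.mul_mem_left _ _ hx)

lemma mul_mul_mem_of_mul_eq_zero {I : Ideal A} [I.IsTwoSided] [IsReduced (A ⧸ I)] {a b : A}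
    (hba : b * a = 0) (x : A) : a * x * b ∈ I := by
  rw [← Ideal.Quotient.eq_zero_iff_mem]
  refine IsNilpotent.eq_zero ⟨2, ?_⟩
  have hsq : (a * x * b) ^ 2 = a * x * (b * a) * x * b := by noncomm_ring
  rw [← map_pow, hsq, hba, mul_zero, zero_mul, zero_mul, map_zero]

lemma nonempty_linearEquiv_span_singleton {e f a x : A} (hae : a * e = a) (hfa : f * a = a)
    (hex : e * x = x) (hxf : x * f = x) (hax : a * x = f) (hxa : x * a = e) :
    Nonempty ((Submodule.span A {e} : Submodule A A) ≃ₗ[A]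
      (Submodule.span A {f} : Submodule A A)) := by
  have mul_mem {c d z : A} (hcz : c * z = z) (hzd : z * d = z) :
      ∀ y ∈ Submodule.span A {c}, y * z ∈ Submodule.span A {d} := by
    intro y hy
    obtain ⟨b, rfl⟩ := Submodule.mem_span_singleton.1 hy
    refine Submodule.mem_span_singleton.2 ⟨b * z, ?_⟩
    rw [smul_eq_mul, smul_eq_mul, mul_assoc, hzd, mul_assoc, hcz]
  have mul_inv {c z w : A} (hcz : c * z = z) (hzw : z * w = c) :
      ∀ y ∈ Submodule.span A {c}, y * z * w = y := by
    intro y hy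
    obtain ⟨b, rfl⟩ := Submodule.mem_span_singleton.1 hy
    rw [smul_eq_mul, mul_assoc b, hcz, mul_assoc, hzw]
  exact ⟨LinearEquiv.ofLinearMap
    (LinearMap.restrict (LinearMap.toSpanSingleton A A x) (mul_mem hex hxf))
    (LinearMap.restrict (LinearMap.toSpanSingleton A A a) (mul_mem hfa hae))
    (LinearMap.ext fun y => Subtype.ext (mul_inv hfa hax y y.2))
    (LinearMap.ext fun y => Subtype.ext (mul_inv hex hxa y y.2))⟩

end Idempotents

section Basic

variable {A : Type} [Ring A]

lemma IsPrimitiveIdempotent.eq_of_isIdempotentElem {e g : A} (he : IsPrimitiveIdempotent A e)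
    (hg : IsIdempotentElem g) (heg : e * g = g) (hge : g * e = g) (hg0 : g ≠ 0) : g = e := by
  obtain ⟨hidem, -, hprim⟩ := he
  have hcompl : IsIdempotentElem (e - g) := hg.sub hidem hge heg
  refine (sub_eq_zero.1 <| (hprim g (e - g) hg hcompl ?_ ?_ ?_).resolve_left hg0).symm
  · rw [mul_sub, hge, hg.eq, sub_self]
  · rw [sub_mul, heg, hg.eq, sub_self]
  · rw [add_sub_cancel]

lemma IsPrimitiveIdempotent.exists_mul_eq_of_notMem_jacobson [IsSemiprimaryRing A] {e f x : A}
    (he : IsPrimitiveIdempotent A e) (hf : IsPrimitiveIdempotent A f)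
    (hex : e * x = x) (hxf : x * f = x) (hx : x ∉ Ring.jacobson A) :
    ∃ a, a * e = a ∧ f * a = a ∧ a * x = f ∧ x * a = e := by
  have hee : e * e = e := he.1
  have hff : f * f = f := hf.1
  obtain ⟨y, hyx, hyx0⟩ := exists_isIdempotentElem_mul_ne_zero hx
  have hyxf : y * x * f = y * x := by rw [mul_assoc, hxf]
  have hfyx : f * (y * x) = f := by
    refine hf.eq_of_isIdempotentElem ?_ ?_ ?_ fun h => hyx0 ?_
    · calc f * (y * x) * (f * (y * x)) = f * (y * x * f * (y * x)) := by noncomm_ring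
        _ = f * (y * x) := by rw [hyxf, hyx.eq]
    · rw [← mul_assoc, hff]
    · rw [mul_assoc, hyxf]
    · calc y * x = y * x * f * (y * x) := by rw [hyxf, hyx.eq]
        _ = 0 := by rw [mul_assoc, h, mul_zero]
  have hax : f * y * e * x = f := by rw [mul_assoc, hex, mul_assoc, hfyx]
  have hxax : x * (f * y * e) * x = x := by rw [mul_assoc, hax, hxf]
  refine ⟨f * y * e, by rw [mul_assoc, hee], by simp only [← mul_assoc, hff], hax, ?_⟩
  refine he.eq_of_isIdempotentElem ?_ ?_ ?_ fun h => hx ?_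
  · rw [IsIdempotentElem, ← mul_assoc, hxax]
  · rw [← mul_assoc, hex]
  · simp only [mul_assoc, hee]
  · rw [← hxax, h, zero_mul]; exact zero_mem _

lemma mul_mul_mem_jacobson_of_isEmpty_linearEquiv [IsSemiprimaryRing A] {e f : A}
    (he : IsPrimitiveIdempotent A e) (hf : IsPrimitiveIdempotent A f)
    (hef : IsEmpty ((Submodule.span A {e} : Submodule A A) ≃ₗ[A]
      (Submodule.span A {f} : Submodule A A))) (x : A) : e * x * f ∈ Ring.jacobson A := by
  by_contra hx
  have hex : e * (e * x * f) = e * x * f := by simp only [← mul_assoc, he.1.eq]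
  have hxf : e * x * f * f = e * x * f := by rw [mul_assoc, hf.1.eq]
  obtain ⟨a, hae, hfa, hax, hxa⟩ := he.exists_mul_eq_of_notMem_jacobson hf hex hxf hx
  exact (nonempty_linearEquiv_span_singleton hae hfa hex hxf hax hxa).elim hef.false

lemma IsPrimitiveIdempotent.mul_mul_mem_jacobson_of_mul_self_mem [IsSemiprimaryRing A] {e x : A}
    (he : IsPrimitiveIdempotent A e) (hx : e * x * e * (e * x * e) ∈ Ring.jacobson A) :
    e * x * e ∈ Ring.jacobson A := by
  by_contra hxJ
  have hex : e * (e * x * e) = e * x * e := by simp only [← mul_assoc, he.1.eq]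
  have hxe : e * x * e * e = e * x * e := by rw [mul_assoc, he.1.eq]
  obtain ⟨a, -, -, hax, -⟩ := he.exists_mul_eq_of_notMem_jacobson he hex hxe hxJ
  have hmul : e * x * e = a * (e * x * e * (e * x * e)) := by rw [← mul_assoc, hax, hex]
  exact hxJ (hmul ▸ Ideal.mul_mem_left _ a hx)

theorem IsBasicRing.isReduced_quotient_jacobson [IsSemiprimaryRing A] (hA : IsBasicRing A) :
    IsReduced (A ⧸ Ring.jacobson A) := by
  obtain ⟨n, e, ⟨hprim, -, hsum⟩, hiso⟩ := hA
  have offdiag (i j) (hij : i ≠ j) (x) : e i * x * e j ∈ Ring.jacobson A :=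
    mul_mul_mem_jacobson_of_isEmpty_linearEquiv (hprim i) (hprim j) (hiso i j hij) x
  rw [isReduced_iff_pow_one_lt 2 one_lt_two, Ideal.Quotient.mk_surjective.forall]
  intro x hx2
  rw [← map_pow, Ideal.Quotient.eq_zero_iff_mem] at hx2
  rw [Ideal.Quotient.eq_zero_iff_mem]
  refine mem_of_forall_mul_mul_mem hsum fun i j => ?_
  obtain rfl | hij := eq_or_ne i j
  · exact (hprim i).mul_mul_mem_jacobson_of_mul_self_mem <|
      corner_mul_self_mem (hprim i).1 hsum (fun j hj => offdiag i j hj.symm x) hx2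
  · exact offdiag i j hij x

end Basic

namespace SGA

variable {k : Type} [CommRing k] {Λ : Type} [Ring Λ] [Algebra k Λ]
variable {S : Type} [Group S] {σ : S →* (Λ ≃ₐ[k] Λ)}

/-- The group element `1 ⊗ h` of the skew group algebra. -/
def of (σ : S →* (Λ ≃ₐ[k] Λ)) (h : S) : SGA σ := ⟨fun g => if g = h then 1 else 0⟩

lemma toFun_of (h g : S) : (of σ h).toFun g = if g = h then 1 else 0 := rfl

/-- Invariance of a left ideal `I` of `Λ` under the action `σ` of `S`; for such `I`, the left ideal
`I ⊗ kS` of `ΛS` is `I.map (emb σ)`. -/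
def IsInvariant (σ : S →* (Λ ≃ₐ[k] Λ)) (I : Ideal Λ) : Prop :=
  ∀ g : S, ∀ a ∈ I, σ g a ∈ I

lemma isInvariant_jacobson (σ : S →* (Λ ≃ₐ[k] Λ)) : IsInvariant σ (Ring.jacobson Λ) := by
  intro g a ha
  have : RingHomSurjective (σ g : Λ →+* Λ) := ⟨(σ g).surjective⟩
  exact Ring.le_comap_jacobson (σ g : Λ →+* Λ) ha

lemma IsInvariant.leftIdealPow {I : Ideal Λ} (hI : IsInvariant σ I) (n : ℕ) :
    IsInvariant σ (leftIdealPow Λ I n) := by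
  induction n with
  | zero => exact fun _ _ _ => Submodule.mem_top
  | succ n ih =>
    intro g
    suffices h : _root_.leftIdealPow Λ I (n + 1) ≤
        Ideal.comap (σ g : Λ →+* Λ) (_root_.leftIdealPow Λ I (n + 1)) from fun a ha => h ha
    refine Submodule.span_le.2 ?_
    rintro _ ⟨a, ha, b, hb, rfl⟩
    exact Submodule.subset_span ⟨σ g a, hI g a ha, σ g b, ih g b hb, map_mul _ _ _⟩

variable [Fintype S]

lemma toFun_sum {ι : Type*} (s : Finset ι) (F : ι → SGA σ) (g : S) :
    (∑ i ∈ s, F i).toFun g = ∑ i ∈ s, (F i).toFun g :=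
  map_sum (⟨⟨fun f => f.toFun g, rfl⟩, fun _ _ => rfl⟩ : SGA σ →+ Λ) F s

lemma toFun_sub (f h : SGA σ) (g : S) : (f - h).toFun g = f.toFun g - h.toFun g := by
  rw [sub_eq_add_neg, toFun_add, toFun_neg, sub_eq_add_neg]

lemma toFun_emb (a : Λ) (g : S) : (emb σ a).toFun g = if g = 1 then a else 0 := rfl

lemma toFun_emb_mul (a : Λ) (f : SGA σ) (g : S) : (emb σ a * f).toFun g = a * f.toFun g := by
  rw [toFun_mul, Finset.sum_eq_single 1] <;> simp +contextual [toFun_emb]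

lemma toFun_mul_emb (f : SGA σ) (a : Λ) (g : S) :
    (f * emb σ a).toFun g = f.toFun g * σ g a := by
  rw [toFun_mul, Finset.sum_eq_single g] <;> simp +contextual [toFun_emb, inv_mul_eq_one]

lemma toFun_mul_of (f : SGA σ) (h g : S) : (f * of σ h).toFun g = f.toFun (g * h⁻¹) := by
  rw [toFun_mul, Finset.sum_eq_single (g * h⁻¹)]
  · simp [toFun_of]
  · intro b _ hb
    have hbg : b⁻¹ * g ≠ h := fun hbg => hb (by rw [← hbg]; group)
    simp [toFun_of, hbg]
  · simp

lemma eq_sum_emb_mul_of (f : SGA σ) : f = ∑ g, emb σ (f.toFun g) * of σ g := by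
  ext x
  simp [toFun_sum, toFun_emb_mul, toFun_of, -toFun_mul]

lemma of_mul_emb (h : S) (a : Λ) : of σ h * emb σ a = emb σ (σ h a) * of σ h := by
  ext g
  rw [toFun_mul_emb, toFun_emb_mul, toFun_of]
  by_cases hg : g = h <;> simp [hg]

lemma mem_map_emb_iff {I : Ideal Λ} (hI : IsInvariant σ I) {f : SGA σ} :
    f ∈ I.map (emb σ) ↔ ∀ g, f.toFun g ∈ I := by
  refine ⟨fun hf g => ?_, fun hf => ?_⟩
  · induction hf using Submodule.span_induction generalizing g with
    | mem f hf =>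
      obtain ⟨a, ha, rfl⟩ := hf
      rw [toFun_emb]
      split_ifs
      exacts [ha, zero_mem _]
    | zero => exact zero_mem _
    | add f h _ _ hf hh => exact add_mem (hf g) (hh g)
    | smul c f _ hf =>
      rw [smul_eq_mul, toFun_mul]
      exact sum_mem fun h _ => Ideal.mul_mem_left _ _ (hI h _ (hf _))
  · rw [eq_sum_emb_mul_of f]
    refine sum_mem fun g _ => ?_
    have hcomm : emb σ (f.toFun g) * of σ g = of σ g * emb σ (σ g⁻¹ (f.toFun g)) := by
      rw [of_mul_emb, map_inv, AlgEquiv.aut_inv, AlgEquiv.apply_symm_apply]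
    rw [hcomm]
    exact Ideal.mul_mem_left _ _ (Ideal.mem_map_of_mem _ (hI _ _ (hf g)))

theorem leftIdealPow_map_emb {I : Ideal Λ} (hI : IsInvariant σ I) (n : ℕ) :
    leftIdealPow (SGA σ) (I.map (emb σ)) n = Ideal.map (emb σ) (leftIdealPow Λ I n) := by
  induction n with
  | zero => exact (Ideal.map_top (emb σ)).symm
  | succ n ih =>
    apply le_antisymm
    · refine Submodule.span_le.2 ?_
      rintro _ ⟨a, ha, b, hb, rfl⟩
      rw [ih, mem_map_emb_iff (hI.leftIdealPow n)] at hb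
      rw [SetLike.mem_coe, mem_map_emb_iff (hI.leftIdealPow (n + 1))]
      intro g
      rw [toFun_mul]
      exact sum_mem fun h _ => Submodule.subset_span
        ⟨_, (mem_map_emb_iff hI).1 ha h, _, hI.leftIdealPow n h _ (hb _), rfl⟩
    · refine (Ideal.map_span (emb σ) _).trans_le (Submodule.span_le.2 ?_)
      rintro _ ⟨_, ⟨a, ha, b, hb, rfl⟩, rfl⟩
      refine Submodule.subset_span ⟨emb σ a, Ideal.mem_map_of_mem _ ha, emb σ b, ?_, map_mul _ _ _⟩
      rw [ih]
      exact Ideal.mem_map_of_mem _ hb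

/-- The left `Λ`-module structure on the skew group algebra, along `λ ↦ λ ⊗ 1`. -/
instance : Module Λ (SGA σ) := Module.compHom (SGA σ) (emb σ)

instance : IsScalarTower Λ (SGA σ) (SGA σ) := ⟨fun a f h => mul_assoc (emb σ a) f h⟩

instance : Module.Finite Λ (SGA σ) :=
  ⟨Submodule.fg_def.2 ⟨Set.range (of σ), Set.finite_range _, by
    refine eq_top_iff.2 fun f _ => ?_
    rw [eq_sum_emb_mul_of f]
    exact sum_mem fun g _ => Submodule.smul_mem _ (f.toFun g) (Submodule.subset_span ⟨g, rfl⟩)⟩⟩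

-- Nakayama: a maximal left ideal lies in a maximal `Λ`-submodule, which contains `𝔯 ⊗ kS`, so it
-- cannot generate the unit ideal together with `𝔯 ⊗ kS`.
theorem map_emb_jacobson_le : (Ring.jacobson Λ).map (emb σ) ≤ Ring.jacobson (SGA σ) := by
  refine le_sInf fun m hm => ?_
  by_contra hle
  have hsup : m ⊔ (Ring.jacobson Λ).map (emb σ) = ⊤ :=
    (Set.mem_ofPred.mp hm).2 _ (left_lt_sup.2 hle)
  obtain ⟨N, hN, hmN⟩ := (eq_top_or_exists_le_coatom (m.restrictScalars Λ)).resolve_left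
    fun h => hm.1 (by simpa using h)
  have hJN : ∀ f ∈ (Ring.jacobson Λ).map (emb σ), f ∈ N := by
    intro f hf
    rw [mem_map_emb_iff (isInvariant_jacobson σ)] at hf
    rw [eq_sum_emb_mul_of f]
    refine sum_mem fun g _ => ?_
    have hle_N : Module.jacobson Λ (SGA σ) ≤ N := sInf_le (Set.mem_ofPred.mpr hN)
    have hsmul : f.toFun g • of σ g ∈ Ring.jacobson Λ • (⊤ : Submodule Λ (SGA σ)) :=
      Submodule.smul_mem_smul (hf g) Submodule.mem_top
    exact hle_N (Ring.jacobson_smul_top_le Λ (SGA σ) hsmul)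
  refine hN.1 (eq_top_iff.2 fun f _ => ?_)
  obtain ⟨a, ha, b, hb, rfl⟩ := Submodule.mem_sup.1 (hsup ▸ Submodule.mem_top : f ∈ _)
  exact add_mem (hmN ha) (hJN b hb)

lemma mem_jacobson_of_emb_mem {a : Λ} (ha : emb σ a ∈ Ring.jacobson (SGA σ)) :
    a ∈ Ring.jacobson Λ := by
  rw [← Ideal.jacobson_bot, Ideal.mem_jacobson_iff] at ha ⊢
  intro y
  obtain ⟨z, hz⟩ := ha (emb σ y)
  refine ⟨z.toFun 1, ?_⟩
  have h1 := congrArg (fun f => f.toFun 1) ((Ideal.mem_bot).1 hz)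
  simpa [toFun_sub, toFun_mul_emb, toFun_one, -toFun_mul] using h1

lemma emb_mul_mul_emb_sub_mem [IsReduced (Λ ⧸ Ring.jacobson Λ)] {e : Λ}
    (he : ∀ g : S, g ≠ 1 → σ g e * e = 0) (f : SGA σ) :
    emb σ e * f * emb σ e - emb σ (e * f.toFun 1 * e) ∈ (Ring.jacobson Λ).map (emb σ) := by
  rw [mem_map_emb_iff (isInvariant_jacobson σ)]
  intro g
  rw [toFun_sub, toFun_mul_emb, toFun_emb_mul, toFun_emb]
  obtain rfl | hg := eq_or_ne g 1
  · simp
  · simpa [hg] using mul_mul_mem_of_mul_eq_zero (he g hg) (f.toFun g)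

theorem jacobson_eq_map_emb [IsReduced (Λ ⧸ Ring.jacobson Λ)] {ι : Type*} [Fintype ι] {e : ι → Λ}
    (he : CompleteOrthogonalIdempotents e)
    (hfree : ∀ g : S, g ≠ 1 → ∀ i, σ g (e i) * e i = 0) :
    Ring.jacobson (SGA σ) = (Ring.jacobson Λ).map (emb σ) := by
  refine le_antisymm (fun f hf => ?_) map_emb_jacobson_le
  have toFun_one_mem (f : SGA σ) (hf : f ∈ Ring.jacobson (SGA σ)) :
      f.toFun 1 ∈ Ring.jacobson Λ := by
    refine mem_of_forall_mul_mul_mem he.complete fun i j => ?_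
    obtain rfl | hij := eq_or_ne i j
    · refine mem_jacobson_of_emb_mem (σ := σ) ?_
      have hfi : emb σ (e i) * f * emb σ (e i) ∈ Ring.jacobson (SGA σ) :=
        Ideal.mul_mem_right _ _ (Ideal.mul_mem_left _ _ hf)
      have hsub := map_emb_jacobson_le (emb_mul_mul_emb_sub_mem (fun g hg => hfree g hg i) f)
      simpa using sub_mem hfi hsub
    · exact mul_mul_mem_of_mul_eq_zero (he.ortho hij.symm) _
  rw [mem_map_emb_iff (isInvariant_jacobson σ)]
  intro g
  simpa only [toFun_mul_of, inv_inv, one_mul] using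
    toFun_one_mem (f * of σ g⁻¹) (Ideal.mul_mem_right _ _ hf)

end SGA

theorem skew_group_algebra_radical_powers_general
    {k : Type} [CommRing k] {Λ : Type} [Ring Λ] [Algebra k Λ]
    [IsReduced (Λ ⧸ Ring.jacobson Λ)]
    {S : Type} [Group S] [Fintype S] (σ : S →* (Λ ≃ₐ[k] Λ))
    {ι : Type*} [Fintype ι] {e : ι → Λ} (he : CompleteOrthogonalIdempotents e)
    (hfree : ∀ g : S, g ≠ 1 → ∀ i, σ g (e i) * e i = 0) (i : ℕ) :
    (leftIdealPow (SGA σ) (Ring.jacobson (SGA σ)) i : Set (SGA σ)) =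
      {f : SGA σ | ∀ g : S, f.toFun g ∈ leftIdealPow Λ (Ring.jacobson Λ) i} := by
  have hJ := SGA.isInvariant_jacobson σ
  ext f
  rw [SGA.jacobson_eq_map_emb he hfree, SGA.leftIdealPow_map_emb hJ, SetLike.mem_coe,
    SGA.mem_map_emb_iff (hJ.leftIdealPow i), Set.mem_ofPred_eq]

lemma IsCompletePrimitiveOrthogonalSystem.completeOrthogonalIdempotents {A : Type} [Ring A]
    {n : ℕ} {e : Fin n → A} (he : IsCompletePrimitiveOrthogonalSystem A e) :
    CompleteOrthogonalIdempotents e :=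
  CompleteOrthogonalIdempotents.iff_ortho_complete.2 ⟨fun i j => he.2.1 i j, he.2.2⟩

lemma apply_mul_eq_zero_of_orthogonalIdempotents {A ι : Type*} [Ring A] {e : ι → A}
    (he : OrthogonalIdempotents e) {φ : A → A} {i : ι} (hmem : ∃ j, φ (e i) = e j)
    (hne : φ (e i) ≠ e i) : φ (e i) * e i = 0 := by
  obtain ⟨j, hj⟩ := hmem
  rw [hj]
  exact he.ortho fun hji => hne (hji ▸ hj)

/-- Let `S` be a finite `p`-group (`p = char k`) acting on `Λ`, and
`E = {e_1, ..., e_n}` a complete set of primitive orthogonal idempotents of `Λ` closed under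
the action of `S`, on which `S` acts freely. Then for every `i ≥ 1`, the `i`-th power of the
Jacobson radical of `ΛS` equals `𝔯^i ⊗_k kS`, where `𝔯` is the Jacobson radical of `Λ`. -/
theorem skew_group_algebra_radical_powers
    (k : Type) [Field k] [IsAlgClosed k] (p : ℕ) [CharP k p]
    (Λ : Type) [Ring Λ] [Algebra k Λ] [FiniteDimensional k Λ]
    (hconn : IsConnectedRing Λ) (hbasic : IsBasicRing Λ)
    (S : Type) [Group S] [Fintype S] (hp : IsPGroup p S)
    (σ : S →* (Λ ≃ₐ[k] Λ))
    (n : ℕ) (e : Fin n → Λ)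
    (hE : IsCompletePrimitiveOrthogonalSystem Λ e)
    (hclosed : ∀ (g : S) (i : Fin n), ∃ j : Fin n, σ g (e i) = e j)
    (hfree : ∀ (g : S), g ≠ 1 → ∀ i : Fin n, σ g (e i) ≠ e i) :
    ∀ i : ℕ, 1 ≤ i →
      ((leftIdealPow (SGA σ) ((⊥ : Ideal (SGA σ)).jacobson) i : Set (SGA σ)) =
        {f : SGA σ | ∀ g : S, f.toFun g ∈ leftIdealPow Λ ((⊥ : Ideal Λ).jacobson) i}) := by
  intro i _
  have : IsArtinianRing Λ := IsArtinianRing.of_finite k Λ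
  have : IsReduced (Λ ⧸ Ring.jacobson Λ) := hbasic.isReduced_quotient_jacobson
  have he : CompleteOrthogonalIdempotents e := hE.completeOrthogonalIdempotents
  simpa only [Ideal.jacobson_bot] using
    skew_group_algebra_radical_powers_general σ he (fun g hg i =>
      apply_mul_eq_zero_of_orthogonalIdempotents he.toOrthogonalIdempotents (hclosed g i)
        (hfree g hg i)) i
end
end
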